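/- arXiv:1409.5691 — 2 statements merged into one kernel-verified Lean document; each statement's English description precedes it below -/
import Mathlib

section
/- The configuration of points off the binary Klein quadric and lines external to it is isomorphic to the combinatorial Grassmannian G₂(8): there exists a bijection f from {v : Fin 6 → ZMod 2 | v ≠ 0 ∧ Q v = 1} to the 2-element subsets of Fin 8 such that for all pairwise distinct off-quadric points a, b, c, one has a + b + c = 0 if and only if the union f(a) ∪ f(b) ∪ f(c) has cardinality 3. -/
/-- The hyperbolic quadratic form on GF(2)^6. -/
def Q (v : Fin 6 → ZMod 2) : ZMod 2 := v 0 * v 1 + v 2 * v 3 + v 4 * v 5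

/-- Eight vectors of GF(2)^6, pairwise differing by off-quadric vectors. -/
def pvec : Fin 8 → Fin 6 → ZMod 2 :=
  ![![0, 0, 0, 0, 1, 1],
    ![0, 0, 1, 1, 0, 1],
    ![0, 1, 1, 1, 1, 0],
    ![1, 0, 1, 1, 1, 0],
    ![1, 1, 0, 0, 1, 0],
    ![1, 1, 0, 1, 0, 1],
    ![1, 1, 1, 0, 0, 1],
    ![0, 0, 0, 0, 0, 0]]

/-- The sum of the vectors indexed by a set. -/
def gsum (s : Finset (Fin 8)) : Fin 6 → ZMod 2 := ∑ i ∈ s, pvec i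

theorem gsum_symmDiff (s t : Finset (Fin 8)) : gsum (symmDiff s t) = gsum s + gsum t := by
  have h2 : ∀ x : Fin 6 → ZMod 2, x + x = 0 := fun x => CharTwo.add_self_eq_zero x
  have hs : gsum s = gsum (s \ t) + gsum (s ∩ t) := by
    unfold gsum
    rw [add_comm]
    exact (Finset.sum_inter_add_sum_sdiff s t pvec).symm
  have ht : gsum t = gsum (t \ s) + gsum (s ∩ t) := by
    unfold gsum
    rw [add_comm, Finset.inter_comm]
    exact (Finset.sum_inter_add_sum_sdiff t s pvec).symm
  have hd : gsum (symmDiff s t) = gsum (s \ t) + gsum (t \ s) := by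
    unfold gsum
    rw [symmDiff_def]
    exact Finset.sum_union disjoint_sdiff_sdiff
  rw [hs, ht, hd]
  have := h2 (gsum (s ∩ t))
  calc _ = gsum (s \ t) + gsum (t \ s) + 0 := by simp
    _ = gsum (s \ t) + gsum (t \ s) + (gsum (s ∩ t) + gsum (s ∩ t)) := by rw [this]
    _ = _ := by abel

theorem pvec_pair : ∀ i j : Fin 8, i ≠ j → pvec i + pvec j ≠ 0 ∧ Q (pvec i + pvec j) = 1 := by
  decide

theorem gsum_pair (s : Finset (Fin 8)) (hs : s.card = 2) : gsum s ≠ 0 ∧ Q (gsum s) = 1 := by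
  obtain ⟨i, j, hij, rfl⟩ := Finset.card_eq_two.1 hs
  have : gsum {i, j} = pvec i + pvec j := Finset.sum_pair hij
  rw [this]
  exact pvec_pair i j hij

set_option maxRecDepth 100000 in
theorem gsum_ker : ∀ w ∈ (Finset.univ : Finset (Fin 8)).powerset, w.card % 2 = 0 → gsum w = 0 → w = ∅ ∨ w.card = 8 := by
  decide +kernel

theorem card_symmDiff' (s t : Finset (Fin 8)) :
    (symmDiff s t).card + 2 * (s ∩ t).card = s.card + t.card := by
  have h1 := Finset.card_sdiff_add_card_inter s t
  have h2 := Finset.card_sdiff_add_card_inter t s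
  have h3 : (symmDiff s t).card = (s \ t).card + (t \ s).card := by
    rw [symmDiff_def]
    exact Finset.card_union_of_disjoint disjoint_sdiff_sdiff
  rw [Finset.inter_comm] at h2
  omega

theorem gsum_inj (s t : Finset (Fin 8)) (hs : s.card = 2) (ht : t.card = 2)
    (h : gsum s = gsum t) : s = t := by
  have h0 : gsum (symmDiff s t) = 0 := by
    rw [gsum_symmDiff, h]; exact CharTwo.add_self_eq_zero _
  have hc := card_symmDiff' s t
  rcases gsum_ker _ (by simp) (by omega) h0 with h | h
  · exact symmDiff_eq_bot.1 h
  · omega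

theorem gsum_triple (s t u : Finset (Fin 8)) (hs : s.card = 2) (ht : t.card = 2)
    (hu : u.card = 2) : gsum s + gsum t + gsum u = 0 ↔ u = symmDiff s t := by
  rw [← gsum_symmDiff, ← gsum_symmDiff]
  have hc := card_symmDiff' s t
  have hc' := card_symmDiff' (symmDiff s t) u
  constructor
  · intro h0
    rcases gsum_ker _ (by simp) (by omega) h0 with h | h
    · exact (symmDiff_eq_bot.1 h).symm
    · omega
  · rintro rfl
    simp [gsum]

theorem union_triple (s t u : Finset (Fin 8)) (hs : s.card = 2) (ht : t.card = 2)
    (hu : u.card = 2) (hst : s ≠ t) (hsu : s ≠ u) (htu : t ≠ u) :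
    u = symmDiff s t ↔ (s ∪ t ∪ u).card = 3 := by
  have hc := card_symmDiff' s t
  have hun := Finset.card_union_add_card_inter s t
  constructor
  · rintro rfl
    have : s ∪ t ∪ symmDiff s t = s ∪ t := by
      apply Finset.union_eq_left.2
      exact symmDiff_le_sup
    rw [this]; omega
  · intro h
    have key : ∀ a b : Finset (Fin 8), a.card = 2 → b.card = 2 → a ≠ b → 3 ≤ (a ∪ b).card := by
      intro a b ha hb hab
      by_contra hlt
      have e1 : a = a ∪ b := Finset.eq_of_subset_of_card_le Finset.subset_union_left (by omega)
      have e2 : b = a ∪ b := Finset.eq_of_subset_of_card_le Finset.subset_union_right (by omega)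
      exact hab (e1.trans e2.symm)
    have k1 := key s t hs ht hst
    have w1 : s ∪ t = s ∪ t ∪ u :=
      Finset.eq_of_subset_of_card_le Finset.subset_union_left (by omega)
    have w2 : s ∪ u = s ∪ t ∪ u :=
      Finset.eq_of_subset_of_card_le (by grind) (by have := key s u hs hu hsu; omega)
    have w3 : t ∪ u = s ∪ t ∪ u :=
      Finset.eq_of_subset_of_card_le (by grind) (by have := key t u ht hu htu; omega)
    rw [← w1] at h
    symm
    apply Finset.eq_of_subset_of_card_le
    · intro x hx
      rw [Finset.mem_symmDiff] at hx
      have m2 := Finset.ext_iff.1 w2 x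
      have m3 := Finset.ext_iff.1 w3 x
      simp only [Finset.mem_union] at m2 m3
      clear hc hun h key k1 w1 w2 w3 hs ht hu hst hsu htu
      tauto
    · omega

set_option maxRecDepth 100000 in
theorem card_off : Fintype.card {v : Fin 6 → ZMod 2 // v ≠ 0 ∧ Q v = 1} = 28 := by
  decide +kernel

theorem card_pairs : Fintype.card {s : Finset (Fin 8) // s.card = 2} = 28 := by
  rw [Fintype.card_finset_len]; rfl

/-- The configuration of points off the binary Klein quadric and lines external to it
is isomorphic to the combinatorial Grassmannian G₂(8): there is a bijection from the
off-quadric points to the 2-element subsets of Fin 8 carrying collinearity (a+b+c = 0)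
to collinearity in G₂(8) (the union of the three pairs has cardinality 3). -/
theorem off_quadric_iso_G2_8 :
    ∃ f : {v : Fin 6 → ZMod 2 // v ≠ 0 ∧ Q v = 1} ≃ {s : Finset (Fin 8) // s.card = 2},
      ∀ a b c : {v : Fin 6 → ZMod 2 // v ≠ 0 ∧ Q v = 1},
        a ≠ b → a ≠ c → b ≠ c →
        ((a : Fin 6 → ZMod 2) + (b : Fin 6 → ZMod 2) + (c : Fin 6 → ZMod 2) = 0 ↔
          ((f a : Finset (Fin 8)) ∪ (f b : Finset (Fin 8)) ∪ (f c : Finset (Fin 8))).card = 3) := by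
  let g : {s : Finset (Fin 8) // s.card = 2} → {v : Fin 6 → ZMod 2 // v ≠ 0 ∧ Q v = 1} :=
    fun s => ⟨gsum s.1, gsum_pair s.1 s.2⟩
  have hg : Function.Bijective g := by
    rw [Fintype.bijective_iff_injective_and_card]
    refine ⟨fun s t h => Subtype.ext (gsum_inj _ _ s.2 t.2 (congrArg Subtype.val h)), ?_⟩
    rw [card_off, card_pairs]
  let e := Equiv.ofBijective g hg
  refine ⟨e.symm, ?_⟩
  intro a b c hab hac hbc
  have hv : ∀ x : {v : Fin 6 → ZMod 2 // v ≠ 0 ∧ Q v = 1}, (x : Fin 6 → ZMod 2) = gsum (e.symm x).1 := fun x =>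
    (congrArg Subtype.val (e.apply_symm_apply x)).symm
  have hne : ∀ x y, x ≠ y → (e.symm x).1 ≠ (e.symm y).1 := fun x y hxy h =>
    hxy (e.symm.injective (Subtype.ext h))
  rw [hv a, hv b, hv c, gsum_triple _ _ _ (e.symm a).2 (e.symm b).2 (e.symm c).2]
  exact union_triple _ _ _ (e.symm a).2 (e.symm b).2 (e.symm c).2
    (hne _ _ hab) (hne _ _ hac) (hne _ _ hbc)
end

section
/- Each point off the quadric is contained in exactly two Conwell heptads: for every nonzero vector v of (Fin 6 → ZMod 2) with Q v = 1, the number of Conwell heptads H with v ∈ H is exactly 2. -/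
/-- A Conwell heptad: a set of seven off-quadric points such that the line joining any
two of them is external to the quadric. -/
def IsConwellHeptad (H : Finset (Fin 6 → ZMod 2)) : Prop :=
  H.card = 7 ∧ (∀ v ∈ H, v ≠ 0 ∧ Q v = 1) ∧
    ∀ a ∈ H, ∀ b ∈ H, a ≠ b → Q (a + b) = 1

instance : DecidablePred IsConwellHeptad := fun H => by
  unfold IsConwellHeptad; infer_instance

/-- Coordinates of the eight-point model: the off-quadric points are the sums
`cw i + cw j` with `i ≠ j`. -/
def cw : Fin 8 → Fin 6 → ZMod 2 :=
  ![![0, 0, 0, 0, 0, 0], ![0, 0, 0, 0, 1, 1], ![0, 0, 1, 1, 0, 1], ![0, 1, 1, 1, 1, 0], ![1, 0, 1, 1, 1, 0], ![1, 1, 0, 0, 1, 0], ![1, 1, 0, 1, 0, 1], ![1, 1, 1, 0, 0, 1]]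

/-- The heptad attached to a symbol `i`. -/
def cwS (i : Fin 8) : Finset (Fin 6 → ZMod 2) :=
  (Finset.univ.erase i).image (fun j => cw i + cw j)

lemma cw_surj : ∀ v, Q v = 1 → ∃ i j, i ≠ j ∧ v = cw i + cw j := by
  decide +kernel

set_option synthInstance.maxSize 2000 in
set_option synthInstance.maxHeartbeats 400000 in
lemma cw_Q4 : ∀ i j k l, i ≠ j → i ≠ k → i ≠ l → j ≠ k → j ≠ l → k ≠ l →
    Q (cw i + cw j + (cw k + cw l)) = 0 := by
  decide +kernel

lemma cwS_heptad : ∀ i, IsConwellHeptad (cwS i) := by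
  decide +kernel

lemma cwS_inj : ∀ i j, i ≠ j → cwS i ≠ cwS j := by
  decide +kernel

lemma mem_cwS {i j : Fin 8} (h : i ≠ j) : cw i + cw j ∈ cwS i :=
  Finset.mem_image.2 ⟨j, by simp [h.symm], rfl⟩

lemma mem_cwS_right {i j : Fin 8} (h : i ≠ j) : cw i + cw j ∈ cwS j := by
  rw [add_comm]; exact mem_cwS h.symm

lemma zmod2_add_self (x : Fin 6 → ZMod 2) : x + x = 0 := by
  funext i; exact CharTwo.add_self_eq_zero _

/-- Every point adjacent to `{i, j}` lies in one of the two heptads. -/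
lemma cw_adj {i j : Fin 8} (hij : i ≠ j) {a : Fin 6 → ZMod 2} (ha : Q a = 1)
    (h : Q (a + (cw i + cw j)) = 1) : a ∈ cwS i ∨ a ∈ cwS j := by
  obtain ⟨k, l, hkl, rfl⟩ := cw_surj a ha
  by_cases h1 : k = i
  · subst h1; exact Or.inl (mem_cwS hkl)
  by_cases h2 : k = j
  · subst h2; exact Or.inr (mem_cwS hkl)
  by_cases h3 : l = i
  · subst h3; exact Or.inl (mem_cwS_right hkl)
  by_cases h4 : l = j
  · subst h4; exact Or.inr (mem_cwS_right hkl)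
  rw [cw_Q4 k l i j hkl h1 h2 h3 h4 hij] at h
  exact absurd h (by decide)

/-- No off-quadric point is adjacent to all three points of an external line. -/
lemma no_fourth (a b d : Fin 6 → ZMod 2) (ha : Q a = 1) (hb : Q b = 1) (hd : Q d = 1)
    (hab : Q (a + b) = 1) (hda : Q (d + a) = 1) (hdb : Q (d + b) = 1)
    (h : Q (d + (a + b)) = 1) : False := by
  have key : Q (d + (a + b)) = Q (d + a) + Q (d + b) + Q (a + b) - Q a - Q b - Q d := by
    simp only [Q, Pi.add_apply]; ring
  rw [h, ha, hb, hd, hab, hda, hdb] at key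
  exact absurd key (by decide)

lemma heptad_cases {i j : Fin 8} (hij : i ≠ j) {H : Finset (Fin 6 → ZMod 2)}
    (hH : IsConwellHeptad H) (hv : cw i + cw j ∈ H) : H = cwS i ∨ H = cwS j := by
  obtain ⟨hc, hq, hadj⟩ := hH
  have hsub : H ⊆ cwS i ∨ H ⊆ cwS j := by
    by_contra hcon
    simp only [not_or, Finset.not_subset] at hcon
    obtain ⟨⟨a, haH, hai⟩, b, hbH, hbj⟩ := hcon
    have hav : a ≠ cw i + cw j := fun e => hai (e ▸ mem_cwS hij)
    have hbv : b ≠ cw i + cw j := fun e => hbj (e ▸ mem_cwS_right hij)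
    have haj := (cw_adj hij (hq a haH).2 (hadj a haH _ hv hav)).resolve_left hai
    have hbi := (cw_adj hij (hq b hbH).2 (hadj b hbH _ hv hbv)).resolve_right hbj
    have hab : a ≠ b := fun e => hai (e ▸ hbi)
    have hQab := hadj a haH b hbH hab
    have hsum : a + b = cw i + cw j := by
      obtain ⟨k, hk, rfl⟩ := Finset.mem_image.1 haj
      obtain ⟨l, hl, rfl⟩ := Finset.mem_image.1 hbi
      have hkj : k ≠ j := (Finset.mem_erase.1 hk).1
      have hli : l ≠ i := (Finset.mem_erase.1 hl).1
      have hki : k ≠ i := by rintro rfl; exact hav (add_comm _ _)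
      have hlj : l ≠ j := by rintro rfl; exact hbv rfl
      by_cases hkl : k = l
      · subst hkl
        calc cw j + cw k + (cw i + cw k) = cw i + cw j + (cw k + cw k) := by abel
          _ = _ := by rw [zmod2_add_self, add_zero]
      · rw [cw_Q4 j k i l hkj.symm hij.symm hlj.symm hki hkl hli.symm] at hQab
        exact absurd hQab (by decide)
    have hlt : ({a, b, a + b} : Finset (Fin 6 → ZMod 2)).card < H.card :=
      lt_of_le_of_lt Finset.card_le_three (by omega)
    obtain ⟨d, hdH, hd⟩ := Finset.exists_mem_notMem_of_card_lt_card hlt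
    simp only [Finset.mem_insert, Finset.mem_singleton, not_or] at hd
    exact no_fourth a b d (hq a haH).2 (hq b hbH).2 (hq d hdH).2 hQab
      (hadj d hdH a haH hd.1) (hadj d hdH b hbH hd.2.1)
      (hadj d hdH _ (hsum ▸ hv) hd.2.2)
  refine hsub.imp (fun h => ?_) (fun h => ?_)
  · exact Finset.eq_of_subset_of_card_le h (by rw [hc, (cwS_heptad i).1])
  · exact Finset.eq_of_subset_of_card_le h (by rw [hc, (cwS_heptad j).1])

/-- Each point off the quadric lies in exactly two Conwell heptads. -/
theorem point_in_two_conwell_heptads (v : Fin 6 → ZMod 2) (hv : v ≠ 0) (hQ : Q v = 1) :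
    (Finset.univ.filter (fun H : Finset (Fin 6 → ZMod 2) =>
      IsConwellHeptad H ∧ v ∈ H)).card = 2 := by
  obtain ⟨i, j, hij, rfl⟩ := cw_surj v hQ
  have : (Finset.univ.filter (fun H : Finset (Fin 6 → ZMod 2) =>
      IsConwellHeptad H ∧ cw i + cw j ∈ H)) = {cwS i, cwS j} := by
    ext H
    simp only [Finset.mem_filter, Finset.mem_univ, true_and, Finset.mem_insert,
      Finset.mem_singleton]
    constructor
    · rintro ⟨h1, h2⟩
      exact heptad_cases hij h1 h2
    · rintro (rfl | rfl)
      · exact ⟨cwS_heptad i, mem_cwS hij⟩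
      · exact ⟨cwS_heptad j, mem_cwS_right hij⟩
  rw [this, Finset.card_pair (cwS_inj i j hij)]
end
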